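/- Let γ₁, γ₂ > 0 and 0 < δ < γ₁+γ₂ be real numbers and define ψ(x) = x^x for x > 0 with ψ(0)=1. Then for every real λ with max(0, δ−γ₂) ≤ λ ≤ min(γ₁, δ), one has ψ(γ₁)·ψ(γ₂) / ( ψ(λ)·ψ(γ₁−λ)·ψ(δ−λ)·ψ(γ₂−δ+λ) ) ≤ ψ(γ₁+γ₂) / ( ψ(δ)·ψ(γ₁+γ₂−δ) ); i.e., the left-hand side, as a function of λ, is maximized at λ* = γ₁·δ/(γ₁+γ₂). -/

import Mathlib

/-!
A nonnegative table `a i j` with row sums `r i`, column sums `c j` and total `n` satisfies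
`∑ a i j * log (r i * c j / n) ≤ ∑ a i j * log (a i j)`: this is Gibbs' inequality for two tables
with the same total `n`. Splitting the logarithm turns the left-hand side into
`∑ r i * log (r i) + ∑ c j * log (c j) - n * log n`; the theorem is the exponential of this for the
`2 × 2` table with rows `λ, γ₁ - λ` and `δ - λ, γ₂ - δ + λ`.
-/

open Finset Real

section Gibbs

variable {a b r c n : ℝ}

lemma mul_log_le_mul_log_add_sub (ha : 0 < a) (hb : 0 < b) :
    a * log b ≤ a * log a + b - a := by
  have h : log b - log a ≤ b / a - 1 := by
    simpa only [log_div hb.ne' ha.ne'] using log_le_sub_one_of_pos (div_pos hb ha)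
  calc a * log b = a * log a + a * (log b - log a) := by ring
    _ ≤ a * log a + a * (b / a - 1) := by gcongr
    _ = a * log a + b - a := by field_simp; ring

lemma mul_log_add_log_sub_log_le (ha : 0 ≤ a) (hr : a ≤ r) (hc : a ≤ c) (hn : a ≤ n) :
    a * (log r + log c - log n) ≤ a * log a + r * c / n - a := by
  rcases ha.eq_or_lt with rfl | ha
  · simpa using div_nonneg (mul_nonneg hr hc) hn
  · have hr₀ := ha.trans_le hr
    have hc₀ := ha.trans_le hc
    have hn₀ := ha.trans_le hn
    rw [← log_mul hr₀.ne' hc₀.ne', ← log_div (mul_pos hr₀ hc₀).ne' hn₀.ne']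
    exact mul_log_le_mul_log_add_sub ha (by positivity)

end Gibbs

section RpowSelf

lemma rpow_self_eq_exp_mul_log {x : ℝ} (hx : 0 ≤ x) : x ^ x = exp (x * log x) := by
  rcases hx.eq_or_lt with rfl | hx
  · simp
  · rw [rpow_def_of_pos hx, mul_comm]

lemma rpow_self_pos {x : ℝ} (hx : 0 ≤ x) : 0 < x ^ x :=
  rpow_self_eq_exp_mul_log hx ▸ exp_pos _

lemma prod_rpow_self_eq_exp_sum {ι : Type*} {s : Finset ι} {f : ι → ℝ} (hf : ∀ i ∈ s, 0 ≤ f i) :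
    ∏ i ∈ s, f i ^ f i = exp (∑ i ∈ s, f i * log (f i)) := by
  rw [exp_sum]
  exact prod_congr rfl fun i hi ↦ rpow_self_eq_exp_mul_log (hf i hi)

end RpowSelf

section Marginals

variable {ι κ : Type*} {s : Finset ι} {t : Finset κ} {a : ι → κ → ℝ}

lemma sum_mul_log_marginals_le (ha : ∀ i ∈ s, ∀ j ∈ t, 0 ≤ a i j) :
    ∑ i ∈ s, (∑ j ∈ t, a i j) * log (∑ j ∈ t, a i j) +
        ∑ j ∈ t, (∑ i ∈ s, a i j) * log (∑ i ∈ s, a i j) ≤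
      ∑ i ∈ s, ∑ j ∈ t, a i j * log (a i j) +
        (∑ i ∈ s, ∑ j ∈ t, a i j) * log (∑ i ∈ s, ∑ j ∈ t, a i j) := by
  set r : ι → ℝ := fun i ↦ ∑ j ∈ t, a i j with hr
  set c : κ → ℝ := fun j ↦ ∑ i ∈ s, a i j with hc
  set n : ℝ := ∑ i ∈ s, r i with hn
  have hcn : ∑ j ∈ t, c j = n := sum_comm
  have hcell : ∀ i ∈ s, ∀ j ∈ t,
      a i j * (log (r i) + log (c j) - log n) ≤ a i j * log (a i j) + r i * c j / n - a i j := by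
    intro i hi j hj
    have har : a i j ≤ r i := single_le_sum (f := a i) (ha i hi) hj
    have hac : a i j ≤ c j := single_le_sum (f := (a · j)) (fun i hi ↦ ha i hi j hj) hi
    have hrn : r i ≤ n := single_le_sum (fun i hi ↦ sum_nonneg (ha i hi)) hi
    exact mul_log_add_log_sub_log_le (ha i hi j hj) har hac (har.trans hrn)
  have hlhs : ∑ i ∈ s, ∑ j ∈ t, a i j * (log (r i) + log (c j) - log n) =
      ∑ i ∈ s, r i * log (r i) + ∑ j ∈ t, c j * log (c j) - n * log n := by
    have hrow : ∑ i ∈ s, ∑ j ∈ t, a i j * log (r i) = ∑ i ∈ s, r i * log (r i) := by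
      simp only [hr, sum_mul]
    have hcol : ∑ i ∈ s, ∑ j ∈ t, a i j * log (c j) = ∑ j ∈ t, c j * log (c j) := by
      simp only [hc, sum_mul]
      exact sum_comm
    have htotal : ∑ i ∈ s, ∑ j ∈ t, a i j * log n = n * log n := by
      simp only [hn, hr, sum_mul]
    simp only [mul_sub, mul_add, sum_sub_distrib, sum_add_distrib, hrow, hcol, htotal]
  have hrhs : ∑ i ∈ s, ∑ j ∈ t, (a i j * log (a i j) + r i * c j / n - a i j) =
      ∑ i ∈ s, ∑ j ∈ t, a i j * log (a i j) := by
    have hprod : ∑ i ∈ s, ∑ j ∈ t, r i * c j / n = n := by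
      simp only [← sum_div, ← mul_sum, ← sum_mul, hcn, ← hn, mul_self_div_self]
    simp only [sum_sub_distrib, sum_add_distrib, hprod, ← hr, ← hn, add_sub_cancel_right]
  have hsum := sum_le_sum fun i hi ↦ sum_le_sum (hcell i hi)
  rw [hlhs, hrhs] at hsum
  exact sub_le_iff_le_add.mp hsum

lemma prod_rpow_self_marginals_le (ha : ∀ i ∈ s, ∀ j ∈ t, 0 ≤ a i j) :
    (∏ i ∈ s, (∑ j ∈ t, a i j) ^ (∑ j ∈ t, a i j)) *
        ∏ j ∈ t, (∑ i ∈ s, a i j) ^ (∑ i ∈ s, a i j) ≤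
      (∏ i ∈ s, ∏ j ∈ t, a i j ^ a i j) *
        (∑ i ∈ s, ∑ j ∈ t, a i j) ^ (∑ i ∈ s, ∑ j ∈ t, a i j) := by
  have hrow : ∀ i ∈ s, 0 ≤ ∑ j ∈ t, a i j := fun i hi ↦ sum_nonneg (ha i hi)
  have hcol : ∀ j ∈ t, 0 ≤ ∑ i ∈ s, a i j := fun j hj ↦ sum_nonneg fun i hi ↦ ha i hi j hj
  have hcells : ∏ i ∈ s, ∏ j ∈ t, a i j ^ a i j = exp (∑ i ∈ s, ∑ j ∈ t, a i j * log (a i j)) := by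
    rw [exp_sum]
    exact prod_congr rfl fun i hi ↦ prod_rpow_self_eq_exp_sum (ha i hi)
  rw [prod_rpow_self_eq_exp_sum hrow, prod_rpow_self_eq_exp_sum hcol, hcells,
    rpow_self_eq_exp_mul_log (sum_nonneg hrow), ← exp_add, ← exp_add]
  exact exp_le_exp.mpr (sum_mul_log_marginals_le ha)

end Marginals

lemma rpow_self_marginals_le {a b c d : ℝ} (ha : 0 ≤ a) (hb : 0 ≤ b) (hc : 0 ≤ c) (hd : 0 ≤ d) :
    (a + b) ^ (a + b) * (c + d) ^ (c + d) * ((a + c) ^ (a + c) * (b + d) ^ (b + d)) ≤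
      a ^ a * b ^ b * (c ^ c * d ^ d) * (a + b + (c + d)) ^ (a + b + (c + d)) := by
  have h := prod_rpow_self_marginals_le (s := univ) (t := univ) (a := ![![a, b], ![c, d]])
    (by simp [Fin.forall_fin_two, ha, hb, hc, hd])
  simpa [Fin.sum_univ_two, Fin.prod_univ_two] using h

/-- For `γ₁, γ₂ > 0`, `0 < δ < γ₁+γ₂`, `ψ(x)=x^x` (real power,
`ψ(0)=1`), and every `λ` with `max(0, δ−γ₂) ≤ λ ≤ min(γ₁, δ)`:
`ψ(γ₁)ψ(γ₂)/(ψ(λ)ψ(γ₁−λ)ψ(δ−λ)ψ(γ₂−δ+λ)) ≤ ψ(γ₁+γ₂)/(ψ(δ)ψ(γ₁+γ₂−δ))`,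
i.e. the left-hand side is maximized at `λ* = γ₁δ/(γ₁+γ₂)`. -/
theorem stmt12 (γ₁ γ₂ δ : ℝ) (h1 : 0 < γ₁) (h2 : 0 < γ₂) (hδ0 : 0 < δ)
    (hδ : δ < γ₁ + γ₂) (l : ℝ) (hl1 : max 0 (δ - γ₂) ≤ l) (hl2 : l ≤ min γ₁ δ) :
    (fun ψ : ℝ → ℝ =>
      ψ γ₁ * ψ γ₂ / (ψ l * ψ (γ₁ - l) * ψ (δ - l) * ψ (γ₂ - δ + l)) ≤
        ψ (γ₁ + γ₂) / (ψ δ * ψ (γ₁ + γ₂ - δ)))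
      (fun x => x ^ x) := by
  obtain ⟨hl, hδl⟩ := max_le_iff.mp hl1
  obtain ⟨hlγ, hlδ⟩ := le_min_iff.mp hl2
  have h₁₂ : 0 ≤ γ₁ - l := sub_nonneg.mpr hlγ
  have h₂₁ : 0 ≤ δ - l := sub_nonneg.mpr hlδ
  have h₂₂ : 0 ≤ γ₂ - δ + l := by linarith
  have hrow : δ - l + (γ₂ - δ + l) = γ₂ := by ring
  have hcol : γ₁ - l + (γ₂ - δ + l) = γ₁ + γ₂ - δ := by ring
  have key := rpow_self_marginals_le hl h₁₂ h₂₁ h₂₂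
  rw [hrow, hcol, add_sub_cancel, add_sub_cancel] at key
  have hcells : 0 < l ^ l * (γ₁ - l) ^ (γ₁ - l) * (δ - l) ^ (δ - l) *
      (γ₂ - δ + l) ^ (γ₂ - δ + l) :=
    mul_pos (mul_pos (mul_pos (rpow_self_pos hl) (rpow_self_pos h₁₂)) (rpow_self_pos h₂₁))
      (rpow_self_pos h₂₂)
  have hcols : 0 < δ ^ δ * (γ₁ + γ₂ - δ) ^ (γ₁ + γ₂ - δ) :=
    mul_pos (rpow_self_pos hδ0.le) (rpow_self_pos (sub_pos.mpr hδ).le)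
  refine (div_le_div_iff₀ hcells hcols).mpr (key.trans_eq ?_)
  ring
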